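/- Let S : ℝ × ℝ → ℝ be infinitely differentiable and suppose it satisfies the Samuelson area ratio condition A(x,y,ε,δ)·A(x,y,−ε,−δ) = A(x,y,ε,−δ)·A(x,y,−ε,δ) for all x, y, ε, δ ∈ ℝ, where A(x,y,ε,δ) := S(x+ε, y+δ) − S(x+ε, y) − S(x, y+δ) + S(x,y). Then at every point (x,y) the fourth-order identity S_{xy}·S_{xxyy} = S_{xxy}·S_{xyy} holds, where subscripts denote iterated partial derivatives (e.g. S_{xxy} = ∂³S/∂x∂x∂y). -/

import Mathlib

/-!
The argument applies one single-variable fact twice. If `g`, `h` vanish at `0` and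
`g t * h (-t) = g (-t) * h t` for all `t`, comparing the coefficients of `t ^ 3` gives
`g' 0 * h'' 0 = g'' 0 * h' 0` (`cross_deriv_eq`). For fixed `ε`, the area condition is this
hypothesis for `g δ = A(x, y, ε, δ)` and `h δ = A(x, y, -ε, δ)`. With
`G ε = S_y(x + ε, y) - S_y(x, y)` and `K ε = S_yy(x + ε, y) - S_yy(x, y)`, its conclusion reads
`G ε * K (-ε) = K ε * G (-ε)`, which is the same hypothesis again, now for `G` and `K`. Since
`G' 0 = S_xy`, `G'' 0 = S_xxy`, `K' 0 = S_xyy`, `K'' 0 = S_xxyy`, the second application is the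
claimed identity.
-/

/-- Partial derivative in the first (x) variable. -/
noncomputable def pdx (F : ℝ × ℝ → ℝ) : ℝ × ℝ → ℝ :=
  fun p => deriv (fun a => F (a, p.2)) p.1

/-- Partial derivative in the second (y) variable. -/
noncomputable def pdy (F : ℝ × ℝ → ℝ) : ℝ × ℝ → ℝ :=
  fun p => deriv (fun b => F (p.1, b)) p.2

/-- The second mixed difference of `S` based at `(x,y)` with increments `(ε,δ)`. -/
def mixedDiff (S : ℝ × ℝ → ℝ) (x y ε δ : ℝ) : ℝ :=
  S (x + ε, y + δ) - S (x + ε, y) - S (x, y + δ) + S (x, y)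

theorem hasDerivAt_pdx {F : ℝ × ℝ → ℝ} (hF : ContDiff ℝ (⊤ : ℕ∞) F) (x y : ℝ) :
    HasDerivAt (fun a => F (a, y)) (pdx F (x, y)) x := by
  have hd : Differentiable ℝ F := hF.differentiable (by simp)
  have h : Differentiable ℝ (fun a : ℝ => F (a, y)) := by fun_prop
  exact (h x).hasDerivAt

theorem hasDerivAt_pdy {F : ℝ × ℝ → ℝ} (hF : ContDiff ℝ (⊤ : ℕ∞) F) (x y : ℝ) :
    HasDerivAt (fun b => F (x, b)) (pdy F (x, y)) y := by
  have hd : Differentiable ℝ F := hF.differentiable (by simp)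
  have h : Differentiable ℝ (fun b : ℝ => F (x, b)) := by fun_prop
  exact (h y).hasDerivAt

theorem contDiff_pdx {F : ℝ × ℝ → ℝ} (hF : ContDiff ℝ (⊤ : ℕ∞) F) :
    ContDiff ℝ (⊤ : ℕ∞) (pdx F) := by
  have hd : Differentiable ℝ F := hF.differentiable (by simp)
  have h : pdx F = fun p => fderiv ℝ F p (1, 0) := by
    funext ⟨x, y⟩
    refine (hasDerivAt_pdx hF x y).unique ?_
    exact (hd (x, y)).hasFDerivAt.comp_hasDerivAt x
      ((hasDerivAt_id x).prodMk (hasDerivAt_const x y))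
  rw [h]
  exact (hF.fderiv_right (m := (⊤ : ℕ∞)) (by simp)).clm_apply contDiff_const

theorem contDiff_pdy {F : ℝ × ℝ → ℝ} (hF : ContDiff ℝ (⊤ : ℕ∞) F) :
    ContDiff ℝ (⊤ : ℕ∞) (pdy F) := by
  have hd : Differentiable ℝ F := hF.differentiable (by simp)
  have h : pdy F = fun p => fderiv ℝ F p (0, 1) := by
    funext ⟨x, y⟩
    refine (hasDerivAt_pdy hF x y).unique ?_
    exact (hd (x, y)).hasFDerivAt.comp_hasDerivAt y
      ((hasDerivAt_const y x).prodMk (hasDerivAt_id y))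
  rw [h]
  exact (hF.fderiv_right (m := (⊤ : ℕ∞)) (by simp)).clm_apply contDiff_const

/-- The coefficient of `t ^ 3` in `g t * h (-t) - g (-t) * h t`, extracted by differentiating
three times; `gᵢ` and `hᵢ` are the `i`-th derivatives of `g` and `h`. -/
theorem cross_deriv_eq {g g₁ g₂ g₃ h h₁ h₂ h₃ : ℝ → ℝ}
    (hg : ∀ t, HasDerivAt g (g₁ t) t) (hg₁ : ∀ t, HasDerivAt g₁ (g₂ t) t)
    (hg₂ : ∀ t, HasDerivAt g₂ (g₃ t) t)
    (hh : ∀ t, HasDerivAt h (h₁ t) t) (hh₁ : ∀ t, HasDerivAt h₁ (h₂ t) t)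
    (hh₂ : ∀ t, HasDerivAt h₂ (h₃ t) t)
    (g0 : g 0 = 0) (h0 : h 0 = 0) (hgh : ∀ t, g t * h (-t) = g (-t) * h t) :
    g₁ 0 * h₂ 0 = g₂ 0 * h₁ 0 := by
  have neg : ∀ {f f' : ℝ → ℝ}, (∀ t, HasDerivAt f (f' t) t) →
      ∀ t, HasDerivAt (fun t => f (-t)) (-f' (-t)) t := fun {f f'} hf t => by
    simpa [Function.comp_def] using (hf (-t)).comp t (hasDerivAt_neg t)
  have zero : ∀ {F : ℝ → ℝ} {d t : ℝ}, (∀ s, F s = 0) → HasDerivAt F d t → d = 0 := by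
    intro F d t hF hd
    obtain rfl : F = fun _ => 0 := funext hF
    exact hd.unique (hasDerivAt_const t 0)
  have e₁ : ∀ t, g₁ t * h (-t) - g t * h₁ (-t) + g₁ (-t) * h t - g (-t) * h₁ t = 0 := by
    intro t
    have := zero (F := fun t => g t * h (-t) - g (-t) * h t)
      (fun s => sub_eq_zero.2 (hgh s))
      (((hg t).mul (neg hh t)).sub ((neg hg t).mul (hh t)))
    linarith
  have e₂ : ∀ t, g₂ t * h (-t) - 2 * (g₁ t * h₁ (-t)) + g t * h₂ (-t)
      - g₂ (-t) * h t + 2 * (g₁ (-t) * h₁ t) - g (-t) * h₂ t = 0 := by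
    intro t
    have := zero e₁
      (((((hg₁ t).mul (neg hh t)).sub ((hg t).mul (neg hh₁ t))).add
        ((neg hg₁ t).mul (hh t))).sub ((neg hg t).mul (hh₁ t)))
    linarith
  have e₃ := zero e₂
    (((((((hg₂ 0).mul (neg hh 0)).sub (((hg₁ 0).mul (neg hh₁ 0)).const_mul 2)).add
      ((hg 0).mul (neg hh₂ 0))).sub ((neg hg₂ 0).mul (hh 0))).add
      (((neg hg₁ 0).mul (hh₁ 0)).const_mul 2)).sub ((neg hg 0).mul (hh₂ 0)))
  simp only [neg_zero, g0, h0] at e₃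
  linarith

theorem hasDerivAt_pdx_shift {F : ℝ × ℝ → ℝ} (hF : ContDiff ℝ (⊤ : ℕ∞) F) (x y t : ℝ) :
    HasDerivAt (fun t => F (x + t, y)) (pdx F (x + t, y)) t :=
  (hasDerivAt_pdx hF (x + t) y).comp_const_add x t

theorem hasDerivAt_pdy_shift {F : ℝ × ℝ → ℝ} (hF : ContDiff ℝ (⊤ : ℕ∞) F) (x y t : ℝ) :
    HasDerivAt (fun t => F (x, y + t)) (pdy F (x, y + t)) t :=
  (hasDerivAt_pdy hF x (y + t)).comp_const_add y t

/-- If a smooth `S` satisfies the Samuelson area ratio condition, then at every point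
`S_{xy} · S_{xxyy} = S_{xxy} · S_{xyy}`. -/
theorem samuelson_area_condition_implies_fourth_order_identity
    (S : ℝ × ℝ → ℝ) (hS : ContDiff ℝ (⊤ : ℕ∞) S)
    (harea : ∀ x y ε δ : ℝ,
      mixedDiff S x y ε δ * mixedDiff S x y (-ε) (-δ) =
        mixedDiff S x y ε (-δ) * mixedDiff S x y (-ε) δ) :
    ∀ p : ℝ × ℝ,
      pdx (pdy S) p * pdx (pdx (pdy (pdy S))) p =
        pdx (pdx (pdy S)) p * pdx (pdy (pdy S)) p := by
  have h₁ := contDiff_pdy hS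
  have h₂ := contDiff_pdy h₁
  have d : ∀ x y ε t : ℝ, HasDerivAt (mixedDiff S x y ε)
      (pdy S (x + ε, y + t) - pdy S (x, y + t)) t := by
    intro x y ε t
    exact (((hasDerivAt_pdy_shift hS (x + ε) y t).sub_const _).sub
      (hasDerivAt_pdy_shift hS x y t)).add_const _
  have d' : ∀ {F : ℝ × ℝ → ℝ}, ContDiff ℝ (⊤ : ℕ∞) F → ∀ x y ε t : ℝ,
      HasDerivAt (fun t => F (x + ε, y + t) - F (x, y + t))
        (pdy F (x + ε, y + t) - pdy F (x, y + t)) t := fun hF x y ε t =>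
    (hasDerivAt_pdy_shift hF (x + ε) y t).sub (hasDerivAt_pdy_shift hF x y t)
  rintro ⟨x, y⟩
  have key : ∀ ε : ℝ, (pdy S (x + ε, y) - pdy S (x, y)) *
      (pdy (pdy S) (x + -ε, y) - pdy (pdy S) (x, y)) =
      (pdy S (x + -ε, y) - pdy S (x, y)) *
      (pdy (pdy S) (x + ε, y) - pdy (pdy S) (x, y)) := by
    intro ε
    have := cross_deriv_eq (d x y ε) (d' h₁ x y ε) (d' h₂ x y ε)
      (d x y (-ε)) (d' h₁ x y (-ε)) (d' h₂ x y (-ε))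
      (by simp [mixedDiff]) (by simp [mixedDiff]) (fun t => harea x y ε t)
    simp only [add_zero] at this
    linarith
  have := cross_deriv_eq
    (fun t => (hasDerivAt_pdx_shift h₁ x y t).sub_const (pdy S (x, y)))
    (hasDerivAt_pdx_shift (contDiff_pdx h₁) x y)
    (hasDerivAt_pdx_shift (contDiff_pdx (contDiff_pdx h₁)) x y)
    (fun t => (hasDerivAt_pdx_shift h₂ x y t).sub_const (pdy (pdy S) (x, y)))
    (hasDerivAt_pdx_shift (contDiff_pdx h₂) x y)
    (hasDerivAt_pdx_shift (contDiff_pdx (contDiff_pdx h₂)) x y)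
    (by simp) (by simp) key
  simpa only [add_zero] using this
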